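/- Assume the comodule category A_F of the normal triangular matrix comonad F is hereditary. Then every injective object X of A_F is isomorphic to the cofree comodule F(E) on some object E = (E₁, …, Eₙ) of A₁ × ⋯ × Aₙ with each E_i injective in A_i; in particular, every structure map d_X^{ij} : X_j ⟶ F_{ij}(X_i) (for i < j) is a split epimorphism. -/

import Mathlib

/-!
STATEMENT 12: If the category of comodules over a normal triangular matrix comonad
`F` on `A₁ × ⋯ × Aₙ` is hereditary, then every injective comodule `M` is isomorphic
to a cofree comodule `F(E)` on a componentwise-injective object `E`, and all the
structure maps `d_M^{ij}` (for `i < j`) are split epimorphisms.  The cofree functor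
is presented as a right adjoint of the (concrete) forgetful functor.
-/

open CategoryTheory Limits

universe v u

variable {n : ℕ} {A : Fin n → Type u} [∀ i, Category.{v} (A i)]
  [∀ i, Abelian (A i)] [∀ i, EnoughInjectives (A i)]
variable (F : ∀ ⦃i j : Fin n⦄, i < j → (A i ⥤ A j))
variable (δ : ∀ ⦃i k j : Fin n⦄ (h₁ : i < k) (h₂ : k < j), F (h₁.trans h₂) ⟶ F h₁ ⋙ F h₂)

/-- A comodule over the normal triangular matrix comonad determined by the data
`(F, δ)`. -/
structure Comod where
  X : ∀ i, A i
  d : ∀ {i j : Fin n} (h : i < j), X j ⟶ (F h).obj (X i)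
  compat : ∀ {i k j : Fin n} (h₁ : i < k) (h₂ : k < j),
    d h₂ ≫ (F h₂).map (d h₁) = d (h₁.trans h₂) ≫ (δ h₁ h₂).app (X i)

/-- Morphisms of comodules. -/
@[ext]
structure ComodHom (M N : Comod F δ) where
  f : ∀ i, M.X i ⟶ N.X i
  comm : ∀ {i j : Fin n} (h : i < j), f j ≫ N.d h = M.d h ≫ (F h).map (f i)

instance : Category (Comod F δ) where
  Hom M N := ComodHom F δ M N
  id M := ⟨fun i => 𝟙 (M.X i), fun h => by simp⟩
  comp f g := ⟨fun i => f.f i ≫ g.f i, fun h => by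
    rw [Category.assoc, g.comm, ← Category.assoc, f.comm, Category.assoc, Functor.map_comp]⟩
  id_comp f := by apply ComodHom.ext; funext i; exact Category.id_comp _
  comp_id f := by apply ComodHom.ext; funext i; exact Category.comp_id _
  assoc f g h := by apply ComodHom.ext; funext i; exact Category.assoc _ _ _

/-- A category is hereditary if for every epimorphism `e : E ⟶ X` with `E` injective,
`X` is also injective. -/
def Hereditary (C : Type*) [Category C] : Prop :=
  ∀ ⦃E X : C⦄ (e : E ⟶ X), Epi e → Injective E → Injective X

/-- The forgetful functor from comodules to `A₁ × ⋯ × Aₙ`. -/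
def forgetComod : Comod F δ ⥤ (∀ i, A i) where
  obj M := M.X
  map f := f.f

/-!
A morphism into a component of a comodule is *primitive* if all structure maps kill it. Since the
`F_{ij}` preserve monomorphisms, induction on the degree shows that a comodule morphism is mono as
soon as it is mono on primitives. The primitive part `E` of an injective comodule `M` is injective,
so the inclusion `E ⟶ M` has a retraction, whose adjunct `M ⟶ F(E)` is mono on primitives, hence
split mono. All primitives of `F(E)` come from `E`, so a retraction of `M ⟶ F(E)` is again mono on
primitives, and `M ≅ F(E)`.

For the structure map `d^{ij}`, heredity makes the quotient `N = (0, …, 0, M_i, …, M_n)` of `M`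
injective. Everything in degree `i` of `N` is primitive, so the inclusion of `M_i` into `N` extends
to the cofree comodule on `M_i` placed in degree `i`, whose component in degree `j` is
`F_{ij}(M_i)`. The `j`-th component of the extension is a section of `d^{ij}`.
-/

section PiSingle

open scoped ZeroObject

variable {ι : Type*} [DecidableEq ι] {C : ι → Type*} [∀ i, Category (C i)]
  [∀ i, HasZeroObject (C i)]

/-- The family of objects equal to `Y` at the index `i` and to `0` elsewhere. -/
noncomputable def piSingle (i : ι) (Y : C i) : ∀ k, C k :=
  Function.update (fun _ => 0) i Y

/-- The identification of the only nonzero member of `piSingle i Y` with `Y`. -/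
noncomputable def piSingleIso (i : ι) (Y : C i) : piSingle i Y i ≅ Y :=
  eqToIso (Function.update_self i Y _)

theorem isZero_piSingle {i k : ι} (hk : k ≠ i) (Y : C i) : IsZero (piSingle i Y k) := by
  rw [piSingle, Function.update_of_ne hk]
  exact isZero_zero _

variable [∀ i, HasZeroMorphisms (C i)]

/-- The family of morphisms out of `piSingle i Y` determined by its member at `i`. -/
noncomputable def piSingleDesc {i : ι} {Y : C i} {Z : ∀ k, C k} (f : Y ⟶ Z i) (k : ι) :
    piSingle i Y k ⟶ Z k :=
  Function.update (β := fun k => piSingle i Y k ⟶ Z k) (fun _ => 0) i ((piSingleIso i Y).hom ≫ f) k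

theorem piSingleDesc_self {i : ι} {Y : C i} {Z : ∀ k, C k} (f : Y ⟶ Z i) :
    piSingleDesc f i = (piSingleIso i Y).hom ≫ f :=
  Function.update_self ..

theorem mono_piSingleDesc {i : ι} {Y : C i} {Z : ∀ k, C k} (f : Y ⟶ Z i) [Mono f] (k : ι) :
    Mono (piSingleDesc f k) := by
  by_cases hk : k = i
  · subst hk
    rw [piSingleDesc_self]
    infer_instance
  · exact ⟨fun _ _ _ => (isZero_piSingle hk Y).eq_of_tgt _ _⟩

end PiSingle

namespace Comod

variable {C : Fin n → Type u} [∀ i, Category.{v} (C i)]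
  {G : ∀ ⦃i j : Fin n⦄, i < j → (C i ⥤ C j)}
  {γ : ∀ ⦃i k j : Fin n⦄ (h₁ : i < k) (h₂ : k < j), G (h₁.trans h₂) ⟶ G h₁ ⋙ G h₂}

theorem hom_ext {M N : Comod G γ} {f g : M ⟶ N} (h : ∀ i, f.f i = g.f i) : f = g :=
  ComodHom.ext (funext h)

theorem comp_f {M N K : Comod G γ} (f : M ⟶ N) (g : N ⟶ K) (i : Fin n) :
    (f ≫ g).f i = f.f i ≫ g.f i := rfl

theorem mono_of_mono_f {M N : Comod G γ} (f : M ⟶ N) (hf : ∀ i, Mono (f.f i)) : Mono f where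
  right_cancellation a b hab := hom_ext fun i =>
    (cancel_mono (f.f i)).1 <| by rw [← comp_f, ← comp_f, hab]

theorem epi_of_epi_f {M N : Comod G γ} (f : M ⟶ N) (hf : ∀ i, Epi (f.f i)) : Epi f where
  left_cancellation a b hab := hom_ext fun i =>
    (cancel_epi (f.f i)).1 <| by rw [← comp_f, ← comp_f, hab]

section Primitive

variable [∀ i, HasZeroMorphisms (C i)]

/-- A morphism into a component of a comodule is primitive if all structure maps kill it; these
are the generalized elements of the largest subcomodule with zero structure maps. -/
def IsPrimitive (M : Comod G γ) {j : Fin n} {Z : C j} (x : Z ⟶ M.X j) : Prop :=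
  ∀ ⦃i : Fin n⦄ (h : i < j), x ≫ M.d h = 0

theorem IsPrimitive.precomp {M : Comod G γ} {j : Fin n} {Z Y : C j} {x : Z ⟶ M.X j}
    (hx : M.IsPrimitive x) (y : Y ⟶ Z) : M.IsPrimitive (y ≫ x) := fun i h => by
  rw [Category.assoc, hx h, comp_zero]

theorem IsPrimitive.comp_f {M N : Comod G γ} {j : Fin n} {Z : C j} {x : Z ⟶ M.X j}
    (hx : M.IsPrimitive x) (f : M ⟶ N) : N.IsPrimitive (x ≫ f.f j) := fun i h => by
  rw [Category.assoc, f.comm, ← Category.assoc, hx h, zero_comp]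

end Primitive

section Skyscraper

variable [∀ i, HasZeroMorphisms (C i)] [∀ i, HasZeroObject (C i)]

/-- The comodule with `Y` in degree `j`, zero elsewhere. It corepresents primitive morphisms
from `Y`. -/
noncomputable def skyscraper (j : Fin n) (Y : C j) : Comod G γ where
  X := piSingle j Y
  d _ := 0
  compat _ _ := by rw [zero_comp, zero_comp]

/-- The identification of the only nonzero component of `skyscraper j Y` with `Y`. -/
noncomputable def skyscraperIso (j : Fin n) (Y : C j) :
    (skyscraper j Y : Comod G γ).X j ≅ Y :=
  piSingleIso j Y

/-- The comodule morphism out of a skyscraper determined by a primitive morphism. -/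
noncomputable def skyscraperDesc {N : Comod G γ} {j : Fin n} {Y : C j} (x : Y ⟶ N.X j)
    (hx : N.IsPrimitive x) : skyscraper j Y ⟶ N where
  f := piSingleDesc x
  comm {k l} h := by
    have hx_desc : piSingleDesc x l ≫ N.d h = 0 := by
      by_cases hl : l = j
      · subst hl
        rw [piSingleDesc_self, Category.assoc, hx h, comp_zero]
      · exact (isZero_piSingle hl Y).eq_of_src _ _
    exact hx_desc.trans zero_comp.symm

theorem skyscraperDesc_f_self {N : Comod G γ} {j : Fin n} {Y : C j} (x : Y ⟶ N.X j)
    (hx : N.IsPrimitive x) : (skyscraperDesc x hx).f j = (skyscraperIso j Y).hom ≫ x :=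
  piSingleDesc_self x

theorem isPrimitive_skyscraper {j k : Fin n} {Y : C j} {Z : C k}
    (x : Z ⟶ (skyscraper j Y : Comod G γ).X k) : (skyscraper j Y : Comod G γ).IsPrimitive x :=
  fun _ _ => comp_zero

theorem exists_hom_extending_primitive {M N : Comod G γ} [Injective M] {j : Fin n} {Y : C j}
    (f : Y ⟶ N.X j) [Mono f] (hf : N.IsPrimitive f) (g : Y ⟶ M.X j) (hg : M.IsPrimitive g) :
    ∃ s : N ⟶ M, f ≫ s.f j = g := by
  have : Mono (skyscraperDesc f hf) := mono_of_mono_f _ (mono_piSingleDesc f)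
  obtain ⟨s, hs⟩ := Injective.factors (skyscraperDesc g hg) (skyscraperDesc f hf)
  refine ⟨s, ?_⟩
  have hsj : (skyscraperDesc f hf).f j ≫ s.f j = (skyscraperDesc g hg).f j := by
    rw [← comp_f, hs]
  rwa [skyscraperDesc_f_self, skyscraperDesc_f_self, Category.assoc, cancel_epi] at hsj

end Skyscraper

section Cofree

variable {cofree : (∀ i, C i) ⥤ Comod G γ} (adj : forgetComod G γ ⊣ cofree)

/-- The components of the counit of the adjunction between the forgetful and cofree functors. -/
def cofreeCounit (E : ∀ i, C i) (i : Fin n) : (cofree.obj E).X i ⟶ E i :=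
  adj.counit.app E i

theorem cofree_hom_ext {M : Comod G γ} {E : ∀ i, C i} {f g : M ⟶ cofree.obj E}
    (h : ∀ i, f.f i ≫ cofreeCounit adj E i = g.f i ≫ cofreeCounit adj E i) : f = g :=
  (adj.homEquiv M E).symm.injective <| by
    rw [adj.homEquiv_counit, adj.homEquiv_counit]
    exact funext h

theorem homEquiv_f_comp_cofreeCounit {M : Comod G γ} {E : ∀ i, C i} (ρ : ∀ i, M.X i ⟶ E i)
    (i : Fin n) : ComodHom.f (adj.homEquiv M E ρ) i ≫ cofreeCounit adj E i = ρ i := by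
  have hρ := (adj.homEquiv M E).symm_apply_apply ρ
  rw [adj.homEquiv_counit] at hρ
  exact congrFun hρ i

theorem IsPrimitive.eq_of_comp_cofreeCounit_eq [∀ i, HasZeroMorphisms (C i)]
    [∀ i, HasZeroObject (C i)]
    {E : ∀ i, C i} {j : Fin n} {Z : C j} {x y : Z ⟶ (cofree.obj E).X j}
    (hx : (cofree.obj E).IsPrimitive x) (hy : (cofree.obj E).IsPrimitive y)
    (hxy : x ≫ cofreeCounit adj E j = y ≫ cofreeCounit adj E j) : x = y := by
  have hdesc : skyscraperDesc x hx = skyscraperDesc y hy := cofree_hom_ext adj fun k => by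
    by_cases hk : k = j
    · subst hk
      rw [skyscraperDesc_f_self, skyscraperDesc_f_self, Category.assoc, Category.assoc, hxy]
    · exact (isZero_piSingle hk Z).eq_of_src _ _
  have hdesc_j : (skyscraperDesc x hx).f j = (skyscraperDesc y hy).f j := by rw [hdesc]
  rwa [skyscraperDesc_f_self, skyscraperDesc_f_self, cancel_epi] at hdesc_j

end Cofree

section MonoOnPrimitives

variable [∀ i, Preadditive (C i)] [∀ ⦃i j : Fin n⦄ (h : i < j), (G h).PreservesMonomorphisms]

theorem mono_f_of_mono_on_primitives {M N : Comod G γ} (f : M ⟶ N)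
    (hf : ∀ ⦃j : Fin n⦄ ⦃Z : C j⦄ (x : Z ⟶ M.X j), M.IsPrimitive x → x ≫ f.f j = 0 → x = 0)
    (j : Fin n) : Mono (f.f j) := by
  induction j using WellFoundedLT.induction with
  | ind j ih =>
    refine Preadditive.mono_of_cancel_zero _ fun {Z} x hx => hf x (fun i h => ?_) hx
    have := ih i h
    rw [← cancel_mono ((G h).map (f.f i)), Category.assoc, ← f.comm h, ← Category.assoc, hx,
      zero_comp, zero_comp]

theorem isIso_of_primitives_factor {M N : Comod G γ} (f : M ⟶ N) [IsSplitMono f]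
    (hf : ∀ ⦃j : Fin n⦄ ⦃Z : C j⦄ (x : Z ⟶ N.X j), N.IsPrimitive x → ∃ w, w ≫ f.f j = x) :
    IsIso f := by
  have hretraction (j : Fin n) : f.f j ≫ (retraction f).f j = 𝟙 (M.X j) := by
    rw [← comp_f, IsSplitMono.id]
    rfl
  have : Mono (retraction f) := mono_of_mono_f _ <| mono_f_of_mono_on_primitives _ <| by
    intro j Z x hx hxr
    obtain ⟨w, rfl⟩ := hf x hx
    rw [Category.assoc, hretraction, Category.comp_id] at hxr
    rw [hxr, zero_comp]
  exact ⟨retraction f, IsSplitMono.id f, by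
    rw [← cancel_mono (retraction f), Category.assoc, IsSplitMono.id, Category.comp_id,
      Category.id_comp]⟩

end MonoOnPrimitives

section Primitives

variable [∀ i, HasZeroMorphisms (C i)] [∀ i, HasKernels (C i)]
  [∀ i, HasFiniteBiproducts (C i)]

/-- The object of primitive elements in degree `j`: the common kernel of the structure maps out of
`M.X j`. -/
noncomputable abbrev primitives (M : Comod G γ) (j : Fin n) : C j :=
  kernel (Pi.lift fun i : {i : Fin n // i < j} => M.d i.2)

/-- The inclusion of the primitive elements, the universal primitive morphism. -/
noncomputable abbrev primitivesι (M : Comod G γ) (j : Fin n) : M.primitives j ⟶ M.X j :=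
  kernel.ι _

theorem isPrimitive_primitivesι (M : Comod G γ) (j : Fin n) :
    M.IsPrimitive (M.primitivesι j) := fun i h => by
  rw [← Pi.lift_π (fun i : {i : Fin n // i < j} => M.d i.2) ⟨i, h⟩, ← Category.assoc, primitivesι,
    kernel.condition, zero_comp]

theorem IsPrimitive.exists_comp_primitivesι_eq {M : Comod G γ} {j : Fin n} {Z : C j}
    {x : Z ⟶ M.X j} (hx : M.IsPrimitive x) : ∃ y, y ≫ M.primitivesι j = x := by
  refine ⟨kernel.lift _ x (Pi.hom_ext _ _ fun i => ?_), kernel.lift_ι _ _ _⟩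
  rw [Category.assoc, Pi.lift_π, hx i.2, zero_comp]

theorem injective_primitives (M : Comod G γ) [Injective M] (j : Fin n) :
    Injective (M.primitives j) where
  factors {Y Y'} g f _ := by
    obtain ⟨s, hs⟩ := exists_hom_extending_primitive (N := skyscraper j Y')
      (f ≫ (skyscraperIso j Y').inv) (isPrimitive_skyscraper _) (g ≫ M.primitivesι j)
      ((M.isPrimitive_primitivesι j).precomp g)
    obtain ⟨y, hy⟩ :=
      ((isPrimitive_skyscraper (skyscraperIso j Y').inv).comp_f s).exists_comp_primitivesι_eq
    refine ⟨y, ?_⟩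
    rw [← cancel_mono (M.primitivesι j), Category.assoc, hy, ← hs, Category.assoc]

end Primitives

theorem nonempty_iso_cofree_primitives [∀ i, Preadditive (C i)] [∀ i, HasKernels (C i)]
    [∀ i, HasFiniteBiproducts (C i)]
    [∀ ⦃i j : Fin n⦄ (h : i < j), (G h).PreservesMonomorphisms]
    {cofree : (∀ i, C i) ⥤ Comod G γ} (M : Comod G γ) [Injective M]
    (adj : forgetComod G γ ⊣ cofree) : Nonempty (M ≅ cofree.obj M.primitives) := by
  have := M.injective_primitives
  let ρ (i : Fin n) : M.X i ⟶ M.primitives i := Injective.factorThru (𝟙 _) (M.primitivesι i)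
  have hρ (i : Fin n) : M.primitivesι i ≫ ρ i = 𝟙 _ := Injective.comp_factorThru _ _
  let φ : M ⟶ cofree.obj M.primitives := adj.homEquiv M M.primitives ρ
  have hφ (i : Fin n) : φ.f i ≫ cofreeCounit adj M.primitives i = ρ i :=
    homEquiv_f_comp_cofreeCounit adj ρ i
  have hφ_mono : Mono φ := mono_of_mono_f _ <| mono_f_of_mono_on_primitives _ <| by
    intro j Z x hx hxφ
    obtain ⟨y, rfl⟩ := hx.exists_comp_primitivesι_eq
    have hy : y = 0 := by
      rw [← Category.comp_id y, ← hρ, ← hφ, ← Category.assoc, ← Category.assoc, hxφ, zero_comp]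
    rw [hy, zero_comp]
  have hφ_split : IsSplitMono φ :=
    ⟨⟨Injective.factorThru (𝟙 M) φ, Injective.comp_factorThru _ _⟩⟩
  have hφ_iso : IsIso φ := isIso_of_primitives_factor φ fun j Z x hx => by
    let w := (x ≫ cofreeCounit adj M.primitives j) ≫ M.primitivesι j
    have hw : M.IsPrimitive w := (M.isPrimitive_primitivesι j).precomp _
    refine ⟨w, (hw.comp_f φ).eq_of_comp_cofreeCounit_eq adj hx ?_⟩
    rw [Category.assoc, hφ, Category.assoc, hρ, Category.comp_id]
  exact ⟨asIso φ⟩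

section Coinduced

open scoped ZeroObject

/-- Coassociativity of the comultiplications `γ`, stated componentwise. -/
def Coassociative
    (γ : ∀ ⦃i k j : Fin n⦄ (h₁ : i < k) (h₂ : k < j), G (h₁.trans h₂) ⟶ G h₁ ⋙ G h₂) : Prop :=
  ∀ ⦃i k l j : Fin n⦄ (h₁ : i < k) (h₂ : k < l) (h₃ : l < j) (X : C i),
    (γ h₁ (h₂.trans h₃)).app X ≫ (γ h₂ h₃).app ((G h₁).obj X) =
      (γ (h₁.trans h₂) h₃).app X ≫ (G h₃).map ((γ h₁ h₂).app X)

variable [∀ i, HasZeroObject (C i)]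

variable (G) in
/-- The components of the cofree comodule on `Y` placed in degree `i`: `Y` in degree `i`,
`G_{ik}(Y)` in degrees `k > i`, and zero in degrees `k < i`. -/
noncomputable def coinducedX (i : Fin n) (Y : C i) : ∀ k, C k :=
  Function.update (fun k => if h : i < k then (G h).obj Y else 0) i Y

variable (G) in
/-- The identification of the component of the coinduced comodule in degree `i`. -/
noncomputable def coinducedIsoSelf (i : Fin n) (Y : C i) : coinducedX G i Y i ≅ Y :=
  eqToIso (Function.update_self ..)

/-- The identification of the components of the coinduced comodule in degrees above `i`. -/
noncomputable def coinducedIsoOfLt {i k : Fin n} (h : i < k) (Y : C i) :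
    coinducedX G i Y k ≅ (G h).obj Y :=
  eqToIso ((Function.update_of_ne h.ne' ..).trans (dif_pos h))

theorem isZero_coinducedX {i k : Fin n} (h : k < i) (Y : C i) : IsZero (coinducedX G i Y k) := by
  rw [coinducedX, Function.update_of_ne h.ne, dif_neg h.asymm]
  exact isZero_zero _

variable [∀ i, HasZeroMorphisms (C i)]

/-- The structure maps of the coinduced comodule: the identity of `G_{il}(Y)` for `k = i` and the
comultiplication `G_{il}(Y) ⟶ G_{kl}(G_{ik}(Y))` for `k > i`. -/
noncomputable def coinducedD
    (γ : ∀ ⦃i k j : Fin n⦄ (h₁ : i < k) (h₂ : k < j), G (h₁.trans h₂) ⟶ G h₁ ⋙ G h₂)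
    (i : Fin n) (Y : C i) {k l : Fin n} (h : k < l) :
    coinducedX G i Y l ⟶ (G h).obj (coinducedX G i Y k) :=
  Function.update
    (β := fun k => ∀ ⦃l⦄ (h : k < l), coinducedX G i Y l ⟶ (G h).obj (coinducedX G i Y k))
    (fun k _ h => if hk : i < k then
      (coinducedIsoOfLt (hk.trans h) Y).hom ≫ (γ hk h).app Y ≫
        (G h).map (coinducedIsoOfLt hk Y).inv
      else 0)
    i (fun _ h => (coinducedIsoOfLt h Y).hom ≫ (G h).map (coinducedIsoSelf G i Y).inv) k h

theorem coinducedD_self {i l : Fin n} (Y : C i) (h : i < l) :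
    coinducedD γ i Y h =
      (coinducedIsoOfLt h Y).hom ≫ (G h).map (coinducedIsoSelf G i Y).inv := by
  rw [coinducedD, Function.update_self]

theorem coinducedD_of_lt {i k l : Fin n} (Y : C i) (hk : i < k) (h : k < l) :
    coinducedD γ i Y h =
      (coinducedIsoOfLt (hk.trans h) Y).hom ≫ (γ hk h).app Y ≫
        (G h).map (coinducedIsoOfLt hk Y).inv := by
  rw [coinducedD, Function.update_of_ne hk.ne', dif_pos hk]

variable [∀ ⦃i j : Fin n⦄ (h : i < j), (G h).PreservesZeroMorphisms]

theorem coinducedD_compat (hγ : Coassociative γ) (i : Fin n) (Y : C i) {k l m : Fin n}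
    (h₁ : k < l) (h₂ : l < m) :
    coinducedD γ i Y h₂ ≫ (G h₂).map (coinducedD γ i Y h₁) =
      coinducedD γ i Y (h₁.trans h₂) ≫ (γ h₁ h₂).app (coinducedX G i Y k) := by
  rcases lt_trichotomy i k with hk | rfl | hk
  · simp only [coinducedD_of_lt Y hk, coinducedD_of_lt Y (hk.trans h₁), Functor.map_comp,
      Category.assoc, Iso.map_inv_hom_id_assoc, NatTrans.naturality, Functor.comp_map]
    rw [reassoc_of% hγ hk h₁ h₂ Y]
  · simp only [coinducedD_of_lt Y h₁, coinducedD_self, Functor.map_comp, Category.assoc,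
      Iso.map_inv_hom_id_assoc, NatTrans.naturality, Functor.comp_map]
  · exact ((G h₁ ⋙ G h₂).map_isZero (isZero_coinducedX hk Y)).eq_of_tgt _ _

/-- The cofree comodule on the object `Y` placed in degree `i`. -/
noncomputable def coinduced (hγ : Coassociative γ) (i : Fin n) (Y : C i) : Comod G γ where
  X := coinducedX G i Y
  d := coinducedD γ i Y
  compat := coinducedD_compat hγ i Y

theorem IsPrimitive.exists_comp_d_eq_map (hγ : Coassociative γ) {M : Comod G γ} [Injective M]
    {i j : Fin n} {Y : C i} {x : Y ⟶ M.X i} (hx : M.IsPrimitive x) (h : i < j) :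
    ∃ y : (G h).obj Y ⟶ M.X j, y ≫ M.d h = (G h).map x := by
  let ι : Y ⟶ (coinduced hγ i Y).X i := (coinducedIsoSelf G i Y).inv
  have hι_mono : Mono ι := inferInstanceAs (Mono (coinducedIsoSelf G i Y).inv)
  have hι : (coinduced hγ i Y).IsPrimitive ι := fun k hk =>
    ((G hk).map_isZero (isZero_coinducedX hk Y)).eq_of_tgt _ _
  obtain ⟨s, hs⟩ := exists_hom_extending_primitive ι hι x hx
  let κ : (G h).obj Y ⟶ (coinduced hγ i Y).X j := (coinducedIsoOfLt h Y).inv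
  have hκ : κ ≫ (coinduced hγ i Y).d h = (G h).map ι :=
    (Iso.inv_comp_eq _).2 (coinducedD_self Y h)
  exact ⟨κ ≫ s.f j, by rw [Category.assoc, s.comm, ← Category.assoc, hκ, ← Functor.map_comp, hs]⟩

end Coinduced

section Tail

open scoped ZeroObject

variable [∀ i, HasZeroObject (C i)] (M : Comod G γ) (i : Fin n)

/-- The components of the quotient of `M` by its part in degrees below `i`. -/
noncomputable def tailX (k : Fin n) : C k := if i ≤ k then M.X k else 0

/-- The identification of the components of the tail in degrees from `i` on. -/
noncomputable def tailXIso {i k : Fin n} (h : i ≤ k) : M.tailX i k ≅ M.X k :=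
  eqToIso (if_pos h)

theorem isZero_tailX {i k : Fin n} (h : k < i) : IsZero (M.tailX i k) := by
  rw [tailX, if_neg h.not_ge]
  exact isZero_zero _

variable [∀ i, HasZeroMorphisms (C i)]

/-- The projection of `M.X k` onto the tail: the identity in degrees `k ≥ i`, zero below. -/
noncomputable def tailπ (k : Fin n) : M.X k ⟶ M.tailX i k :=
  if h : i ≤ k then (M.tailXIso h).inv else 0

/-- The section of `tailπ`; it is not a morphism of comodules. -/
noncomputable def tailι (k : Fin n) : M.tailX i k ⟶ M.X k :=
  if h : i ≤ k then (M.tailXIso h).hom else 0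

theorem tailι_comp_tailπ (k : Fin n) : M.tailι i k ≫ M.tailπ i k = 𝟙 _ := by
  by_cases h : i ≤ k
  · rw [tailι, tailπ, dif_pos h, dif_pos h, Iso.hom_inv_id]
  · exact (M.isZero_tailX (not_le.1 h)).eq_of_src _ _

theorem tailπ_comp_tailι {i k : Fin n} (h : i ≤ k) : M.tailπ i k ≫ M.tailι i k = 𝟙 _ := by
  rw [tailι, tailπ, dif_pos h, dif_pos h, Iso.inv_hom_id]

instance (k : Fin n) : IsSplitEpi (M.tailπ i k) :=
  ⟨⟨M.tailι i k, M.tailι_comp_tailπ i k⟩⟩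

/-- The structure maps of the tail. -/
noncomputable def tailD {k l : Fin n} (h : k < l) : M.tailX i l ⟶ (G h).obj (M.tailX i k) :=
  M.tailι i l ≫ M.d h ≫ (G h).map (M.tailπ i k)

variable [∀ ⦃i j : Fin n⦄ (h : i < j), (G h).PreservesZeroMorphisms]

theorem tailπ_comp_tailD {k l : Fin n} (h : k < l) :
    M.tailπ i l ≫ M.tailD i h = M.d h ≫ (G h).map (M.tailπ i k) := by
  rcases le_or_gt i k with hk | hk
  · rw [tailD, ← Category.assoc, M.tailπ_comp_tailι (hk.trans h.le), Category.id_comp]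
  · exact ((G h).map_isZero (M.isZero_tailX hk)).eq_of_tgt _ _

/-- The quotient of `M` by its part in degrees below `i`. -/
noncomputable def tail : Comod G γ where
  X := M.tailX i
  d := M.tailD i
  compat {k l m} h₁ h₂ := by
    rw [← cancel_epi (M.tailπ i m), ← Category.assoc, ← Category.assoc, tailπ_comp_tailD,
      tailπ_comp_tailD, Category.assoc, ← Functor.map_comp, tailπ_comp_tailD, Functor.map_comp,
      ← Category.assoc, M.compat, Category.assoc, Category.assoc, (γ h₁ h₂).naturality]
    rfl

/-- The quotient morphism of a comodule onto its tail. -/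
noncomputable def toTail : M ⟶ M.tail i where
  f := M.tailπ i
  comm := M.tailπ_comp_tailD i

instance : Epi (M.toTail i) :=
  epi_of_epi_f _ fun k => inferInstanceAs (Epi (M.tailπ i k))

theorem isPrimitive_tail {Z : C i} (x : Z ⟶ (M.tail i).X i) : (M.tail i).IsPrimitive x :=
  fun _ h => ((G h).map_isZero (M.isZero_tailX h)).eq_of_tgt _ _

theorem isSplitEpi_d_of_injective_tail (hγ : Coassociative γ) {i j : Fin n} [Injective (M.tail i)]
    (h : i < j) : IsSplitEpi (M.d h) := by
  obtain ⟨y, hy⟩ : ∃ y : (G h).obj (M.X i) ⟶ M.tailX i j,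
      y ≫ M.tailD i h = (G h).map (M.tailπ i i) :=
    (M.isPrimitive_tail i (M.tailπ i i)).exists_comp_d_eq_map hγ h
  have hretract : (G h).map (M.tailπ i i) ≫ (G h).map (M.tailι i i) = 𝟙 _ := by
    rw [← Functor.map_comp, M.tailπ_comp_tailι le_rfl, CategoryTheory.Functor.map_id]
  refine ⟨⟨y ≫ M.tailι i j, ?_⟩⟩
  calc (y ≫ M.tailι i j) ≫ M.d h
      = (y ≫ M.tailD i h) ≫ (G h).map (M.tailι i i) := by
        simp only [tailD, Category.assoc, hretract, Category.comp_id]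
    _ = 𝟙 _ := by rw [hy, hretract]

end Tail

end Comod

theorem stmt_12_general {C : Fin n → Type u} [∀ i, Category.{v} (C i)]
    [∀ i, Preadditive (C i)] [∀ i, HasKernels (C i)] [∀ i, HasFiniteBiproducts (C i)]
    {G : ∀ ⦃i j : Fin n⦄, i < j → (C i ⥤ C j)}
    {γ : ∀ ⦃i k j : Fin n⦄ (h₁ : i < k) (h₂ : k < j), G (h₁.trans h₂) ⟶ G h₁ ⋙ G h₂}
    (hγ : Comod.Coassociative γ)
    [∀ ⦃i j : Fin n⦄ (h : i < j), (G h).PreservesZeroMorphisms]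
    [∀ ⦃i j : Fin n⦄ (h : i < j), (G h).PreservesMonomorphisms]
    {cofree : (∀ i, C i) ⥤ Comod G γ} (adj : forgetComod G γ ⊣ cofree)
    (M : Comod G γ) [Injective M] :
    (∃ E : ∀ i, C i, (∀ i, Injective (E i)) ∧ Nonempty (M ≅ cofree.obj E)) ∧
      (Hereditary (Comod G γ) → ∀ ⦃i j : Fin n⦄ (h : i < j), IsSplitEpi (M.d h)) := by
  refine ⟨⟨M.primitives, M.injective_primitives, M.nonempty_iso_cofree_primitives adj⟩, ?_⟩
  intro hH i j h
  have : Injective (M.tail i) := hH (M.toTail i) inferInstance inferInstance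
  exact M.isSplitEpi_d_of_injective_tail hγ h

theorem stmt_12
    -- coassociativity of the comonad data:
    (hδ : ∀ ⦃i k l j : Fin n⦄ (h₁ : i < k) (h₂ : k < l) (h₃ : l < j) (X : A i),
      (δ h₁ (h₂.trans h₃)).app X ≫ (δ h₂ h₃).app ((F h₁).obj X) =
        (δ (h₁.trans h₂) h₃).app X ≫ (F h₃).map ((δ h₁ h₂).app X))
    -- the functors `F_{ij}` are additive and left exact:
    (hadd : ∀ ⦃i j : Fin n⦄ (h : i < j), (F h).Additive)
    (hlex : ∀ ⦃i j : Fin n⦄ (h : i < j), PreservesFiniteLimits (F h))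
    -- the cofree functor, right adjoint to the forgetful functor:
    (cofree : (∀ i, A i) ⥤ Comod F δ)
    (adj : forgetComod F δ ⊣ cofree)
    (hH : Hereditary (Comod F δ))
    (M : Comod F δ) (hM : Injective M) :
    (∃ E : ∀ i, A i, (∀ i, Injective (E i)) ∧ Nonempty (M ≅ cofree.obj E)) ∧
      (∀ ⦃i j : Fin n⦄ (h : i < j), IsSplitEpi (M.d h)) := by
  have (i : Fin n) : HasFiniteBiproducts (A i) := Abelian.hasFiniteBiproducts
  obtain ⟨hcofree, hsplit⟩ := stmt_12_general hδ adj M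
  exact ⟨hcofree, hsplit hH⟩
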